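/- Let d ≥ 2n and Ω : M_{d,n}(ℝ) → ℝ be differentiable. Suppose Ω(W + P) ≥ Ω(W) for all W, P with Wᵀ P = 0. Then there exists a matrix nondecreasing function h : S⁺ₙ → ℝ such that Ω(W) = h(Wᵀ W) for all W ∈ M_{d,n}(ℝ). -/

import Mathlib

open Matrix

attribute [local instance] Matrix.frobeniusNormedAddCommGroup Matrix.frobeniusNormedSpace

/-- The derivative of `Ω` at `W` vanishes in the directions orthogonal to `W`. -/
lemma fderiv_eq_zero_of_transpose_mul_eq_zero {d n : ℕ} {Ω : Matrix (Fin d) (Fin n) ℝ → ℝ}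
    (hdiff : Differentiable ℝ Ω)
    (hmono : ∀ W P : Matrix (Fin d) (Fin n) ℝ, Wᵀ * P = 0 → Ω W ≤ Ω (W + P))
    {W P : Matrix (Fin d) (Fin n) ℝ} (hWP : Wᵀ * P = 0) : fderiv ℝ Ω W P = 0 := by
  have hmin : IsLocalMin (fun t : ℝ => Ω (W + t • P)) 0 := by
    refine Filter.Eventually.of_forall fun t => ?_
    simpa using hmono W (t • P) (by rw [Matrix.mul_smul, hWP, smul_zero])
  have hpath : HasDerivAt (fun t : ℝ => W + t • P) P 0 :=
    (((hasDerivAt_id (0 : ℝ)).smul_const P).const_add W).congr_deriv (one_smul ℝ P)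
  have hΩ : HasFDerivAt Ω (fderiv ℝ Ω W) (W + (0 : ℝ) • P) := by
    simpa using (hdiff W).hasFDerivAt
  exact hmin.hasDerivAt_eq_zero (hΩ.comp_hasDerivAt (0 : ℝ) hpath)

/-- `Ω` is constant along the rotation of `B + X` that turns `X` towards `Y` and fixes `B`. -/
lemma apply_add_cos_smul_add_sin_smul {d n : ℕ} {Ω : Matrix (Fin d) (Fin n) ℝ → ℝ}
    (hdiff : Differentiable ℝ Ω)
    (hmono : ∀ W P : Matrix (Fin d) (Fin n) ℝ, Wᵀ * P = 0 → Ω W ≤ Ω (W + P))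
    {B X Y : Matrix (Fin d) (Fin n) ℝ} (hBX : Bᵀ * X = 0) (hBY : Bᵀ * Y = 0)
    (hXY : Xᵀ * Y = 0) (hX : Xᵀ * X = Yᵀ * Y) (t : ℝ) :
    Ω (B + (Real.cos t • X + Real.sin t • Y)) = Ω (B + X) := by
  have hYX : Yᵀ * X = 0 := by
    simpa [Matrix.transpose_mul] using congrArg Matrix.transpose hXY
  have hpath (s : ℝ) : HasDerivAt (fun t : ℝ => B + (Real.cos t • X + Real.sin t • Y))
      (-Real.sin s • X + Real.cos s • Y) s :=
    (((Real.hasDerivAt_cos s).smul_const X).add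
      ((Real.hasDerivAt_sin s).smul_const Y)).const_add B
  have hderiv (s : ℝ) :
      HasDerivAt (fun t : ℝ => Ω (B + (Real.cos t • X + Real.sin t • Y))) 0 s := by
    refine ((hdiff _).hasFDerivAt.comp_hasDerivAt s (hpath s)).congr_deriv
      (fderiv_eq_zero_of_transpose_mul_eq_zero hdiff hmono ?_)
    simp only [Matrix.transpose_add, Matrix.transpose_smul, Matrix.add_mul, Matrix.mul_add,
      Matrix.smul_mul, Matrix.mul_smul, hBX, hBY, hXY, hYX, hX, smul_zero, zero_add, add_zero,
      smul_smul, ← add_smul]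
    rw [show -Real.sin s * Real.cos s + Real.cos s * Real.sin s = 0 by ring, zero_smul]
  simpa using is_const_of_deriv_eq_zero (fun s => (hderiv s).differentiableAt)
    (fun s => (hderiv s).deriv) t 0

/-- A subspace of `ℝ^d` cut out by `n + 1 < d` equations contains a vector of any given length. -/
lemma exists_orthogonal_vector_of_norm {d n : ℕ} (hd : n + 2 ≤ d)
    (W : Matrix (Fin d) (Fin n) ℝ) (v : Fin d → ℝ) :
    ∃ u : Fin d → ℝ, Wᵀ *ᵥ u = 0 ∧ v ⬝ᵥ u = 0 ∧ u ⬝ᵥ u = v ⬝ᵥ v := by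
  have hker := LinearMap.ker_ne_bot_of_finrank_lt
    (f := (Matrix.mulVecLin Wᵀ).prod (dotProductBilin ℝ ℝ v)) (by simp; omega)
  obtain ⟨u, hu, hu0⟩ := (Submodule.ne_bot_iff _).1 hker
  replace hu : Wᵀ *ᵥ u = 0 ∧ v ⬝ᵥ u = 0 := Prod.mk_eq_zero.1 hu
  have huu : u ⬝ᵥ u ≠ 0 := fun h => hu0 (dotProduct_self_eq_zero.1 h)
  have hnn (x : Fin d → ℝ) : 0 ≤ x ⬝ᵥ x := Finset.sum_nonneg fun i _ => mul_self_nonneg (x i)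
  refine ⟨Real.sqrt (v ⬝ᵥ v / u ⬝ᵥ u) • u, ?_, ?_, ?_⟩
  · rw [Matrix.mulVec_smul, hu.1, smul_zero]
  · rw [dotProduct_smul, hu.2, smul_zero]
  · rw [dotProduct_smul, smul_dotProduct, smul_smul,
      Real.mul_self_sqrt (div_nonneg (hnn v) (hnn u)), smul_eq_mul, div_mul_cancel₀ _ huu]

/-- `W` with its columns reflected in the hyperplane orthogonal to `v`. -/
noncomputable def reflectColumns {d n : ℕ} (v : Fin d → ℝ) (W : Matrix (Fin d) (Fin n) ℝ) :
    Matrix (Fin d) (Fin n) ℝ :=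
  W - (2 : ℝ) • vecMulVec v ((v ⬝ᵥ v)⁻¹ • (Wᵀ *ᵥ v))

lemma transpose_mul_vecMulVec_of_sub {d n : ℕ} (v : Fin d → ℝ) (W : Matrix (Fin d) (Fin n) ℝ) :
    (W - vecMulVec v ((v ⬝ᵥ v)⁻¹ • (Wᵀ *ᵥ v)))ᵀ * vecMulVec v ((v ⬝ᵥ v)⁻¹ • (Wᵀ *ᵥ v)) = 0 := by
  by_cases hv : v ⬝ᵥ v = 0
  · rw [dotProduct_self_eq_zero.1 hv, zero_vecMulVec, Matrix.mul_zero]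
  · rw [Matrix.mul_vecMulVec, Matrix.transpose_sub, Matrix.sub_mulVec, transpose_vecMulVec,
      vecMulVec_mulVec, op_smul_eq_smul, smul_smul, mul_inv_cancel₀ hv, one_smul,
      sub_self, zero_vecMulVec]

lemma transpose_mul_self_reflectColumns {d n : ℕ} (v : Fin d → ℝ)
    (W : Matrix (Fin d) (Fin n) ℝ) : (reflectColumns v W)ᵀ * reflectColumns v W = Wᵀ * W := by
  have hBX := transpose_mul_vecMulVec_of_sub v W
  unfold reflectColumns
  generalize vecMulVec v ((v ⬝ᵥ v)⁻¹ • (Wᵀ *ᵥ v)) = X at *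
  have hXB : Xᵀ * (W - X) = 0 := by
    simpa [Matrix.transpose_mul] using congrArg Matrix.transpose hBX
  obtain ⟨B, hB⟩ : ∃ B, B = W - X := ⟨_, rfl⟩
  obtain rfl : W = B + X := by rw [hB, sub_add_cancel]
  rw [← hB] at hBX hXB
  rw [show B + X - (2 : ℝ) • X = B - X by rw [two_smul]; abel]
  simp only [Matrix.transpose_add, Matrix.transpose_sub, Matrix.add_mul, Matrix.mul_add,
    Matrix.sub_mul, Matrix.mul_sub, hBX, hXB]
  abel

lemma apply_reflectColumns {d n : ℕ} (hd : n + 2 ≤ d) {Ω : Matrix (Fin d) (Fin n) ℝ → ℝ}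
    (hdiff : Differentiable ℝ Ω)
    (hmono : ∀ W P : Matrix (Fin d) (Fin n) ℝ, Wᵀ * P = 0 → Ω W ≤ Ω (W + P))
    (v : Fin d → ℝ) (W : Matrix (Fin d) (Fin n) ℝ) : Ω (reflectColumns v W) = Ω W := by
  obtain ⟨u, hWu, hvu, huu⟩ := exists_orthogonal_vector_of_norm hd W v
  have hBX := transpose_mul_vecMulVec_of_sub v W
  unfold reflectColumns
  set w := (v ⬝ᵥ v)⁻¹ • (Wᵀ *ᵥ v)
  have h := apply_add_cos_smul_add_sin_smul hdiff hmono (Y := vecMulVec u w) hBX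
    (by rw [Matrix.mul_vecMulVec, Matrix.transpose_sub, Matrix.sub_mulVec, transpose_vecMulVec,
      vecMulVec_mulVec, hvu, hWu]; simp)
    (by rw [transpose_vecMulVec, vecMulVec_mul_vecMulVec, hvu]; simp)
    (by rw [transpose_vecMulVec, transpose_vecMulVec, vecMulVec_mul_vecMulVec,
      vecMulVec_mul_vecMulVec, huu]) Real.pi
  rw [Real.cos_pi, Real.sin_pi, zero_smul, add_zero, sub_add_cancel] at h
  rw [← h, two_smul]
  congr 1
  module

/-- If `W` and `Z` have equal Gram matrices and agree on a set of columns, reflecting in the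
difference of two corresponding columns makes those agree too and keeps the earlier agreement. -/
lemma reflectColumns_sub_apply {d n : ℕ} {W Z : Matrix (Fin d) (Fin n) ℝ}
    (hWZ : Wᵀ * W = Zᵀ * Z) (k : Fin n) :
    (∀ j, (∀ i, W i j = Z i j) → ∀ i, reflectColumns (Wᵀ k - Zᵀ k) W i j = Z i j) ∧
      ∀ i, reflectColumns (Wᵀ k - Zᵀ k) W i k = Z i k := by
  have hG (j l : Fin n) : Wᵀ j ⬝ᵥ Wᵀ l = Zᵀ j ⬝ᵥ Zᵀ l := congrFun (congrFun hWZ j) l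
  have hentry (i : Fin d) (j : Fin n) (v : Fin d → ℝ) :
      reflectColumns v W i j = W i j - 2 * (v i * ((v ⬝ᵥ v)⁻¹ * (Wᵀ j ⬝ᵥ v))) := rfl
  constructor
  · intro j hj i
    have hcol : Wᵀ j = Zᵀ j := funext hj
    rw [hentry, dotProduct_sub (Wᵀ j), hG, hcol, sub_self, hj]
    ring
  · intro i
    rw [hentry]
    by_cases hv : (Wᵀ k - Zᵀ k) ⬝ᵥ (Wᵀ k - Zᵀ k) = 0
    · have h := congrFun (dotProduct_self_eq_zero.1 hv) i
      rw [hv, _root_.inv_zero, zero_mul, mul_zero, mul_zero, sub_zero]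
      exact sub_eq_zero.1 h
    · have h2 : 2 * (Wᵀ k ⬝ᵥ (Wᵀ k - Zᵀ k)) = (Wᵀ k - Zᵀ k) ⬝ᵥ (Wᵀ k - Zᵀ k) := by
        simp only [dotProduct_sub, sub_dotProduct, hG k k, dotProduct_comm (Zᵀ k) (Wᵀ k)]
        ring
      have hi : (Wᵀ k - Zᵀ k) i = W i k - Z i k := rfl
      rw [hi]
      generalize (Wᵀ k - Zᵀ k) ⬝ᵥ (Wᵀ k - Zᵀ k) = q at *
      have : (W i k - Z i k) * (q⁻¹ * (2 * (Wᵀ k ⬝ᵥ (Wᵀ k - Zᵀ k)))) = W i k - Z i k := by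
        rw [h2, inv_mul_cancel₀ hv, mul_one]
      linarith

lemma apply_eq_of_gram_eq_of_add_two_le {d n : ℕ} (hd : n + 2 ≤ d)
    {Ω : Matrix (Fin d) (Fin n) ℝ → ℝ} (hdiff : Differentiable ℝ Ω)
    (hmono : ∀ W P : Matrix (Fin d) (Fin n) ℝ, Wᵀ * P = 0 → Ω W ≤ Ω (W + P))
    {W Z : Matrix (Fin d) (Fin n) ℝ} (hWZ : Wᵀ * W = Zᵀ * Z) : Ω W = Ω Z := by
  have key (k : ℕ) (hk : k ≤ n) : ∃ V : Matrix (Fin d) (Fin n) ℝ, Vᵀ * V = Zᵀ * Z ∧ Ω V = Ω W ∧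
      ∀ j : Fin n, (j : ℕ) < k → ∀ i, V i j = Z i j := by
    induction k with
    | zero => exact ⟨W, hWZ, rfl, by simp⟩
    | succ k ih =>
      obtain ⟨V, hG, hΩ, hV⟩ := ih (by omega)
      have h := reflectColumns_sub_apply hG ⟨k, hk⟩
      refine ⟨reflectColumns (Vᵀ ⟨k, hk⟩ - Zᵀ ⟨k, hk⟩) V,
        (transpose_mul_self_reflectColumns _ _).trans hG,
        (apply_reflectColumns hd hdiff hmono _ _).trans hΩ, fun j hj => ?_⟩
      rcases Nat.lt_succ_iff_lt_or_eq.1 hj with hj | hj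
      · exact h.1 j (hV j hj)
      · obtain rfl : j = ⟨k, hk⟩ := Fin.ext hj
        exact h.2
  obtain ⟨V, -, hΩ, hV⟩ := key n le_rfl
  rw [← hΩ, show V = Z from Matrix.ext fun i j => hV j j.2 i]

lemma apply_eq_of_gram_eq_of_plane {Ω : Matrix (Fin 2) (Fin 1) ℝ → ℝ} (hdiff : Differentiable ℝ Ω)
    (hmono : ∀ W P : Matrix (Fin 2) (Fin 1) ℝ, Wᵀ * P = 0 → Ω W ≤ Ω (W + P))
    {W Z : Matrix (Fin 2) (Fin 1) ℝ} (hWZ : Wᵀ * W = Zᵀ * Z) : Ω W = Ω Z := by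
  have hnorm : W 0 0 * W 0 0 + W 1 0 * W 1 0 = Z 0 0 * Z 0 0 + Z 1 0 * Z 1 0 := by
    simpa [Matrix.mul_apply, Fin.sum_univ_two] using congrFun (congrFun hWZ 0) 0
  let w : ℂ := ⟨W 0 0, W 1 0⟩
  let z : ℂ := ⟨Z 0 0, Z 1 0⟩
  have hwz : ‖w‖ = ‖z‖ := by
    rw [Complex.norm_def, Complex.norm_def, Complex.normSq_apply, Complex.normSq_apply]
    exact congrArg Real.sqrt hnorm
  have hw0 : ‖w‖ * Real.cos w.arg = W 0 0 := Complex.norm_mul_cos_arg w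
  have hw1 : ‖w‖ * Real.sin w.arg = W 1 0 := Complex.norm_mul_sin_arg w
  have hz0 : ‖w‖ * Real.cos z.arg = Z 0 0 := hwz ▸ Complex.norm_mul_cos_arg z
  have hz1 : ‖w‖ * Real.sin z.arg = Z 1 0 := hwz ▸ Complex.norm_mul_sin_arg z
  have h := apply_add_cos_smul_add_sin_smul hdiff hmono (B := 0) (X := W)
    (Y := !![-W 1 0; W 0 0]) (by simp) (by simp)
    (by ext i j; fin_cases i; fin_cases j; simp [Matrix.mul_apply, Fin.sum_univ_two]; ring)
    (by ext i j; fin_cases i; fin_cases j; simp [Matrix.mul_apply, Fin.sum_univ_two]; ring)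
    (z.arg - w.arg)
  rw [zero_add, zero_add] at h
  rw [← h]
  congr 1
  generalize ‖w‖ = r at *
  generalize w.arg = α at *
  generalize z.arg = β at *
  have hsq := Real.sin_sq_add_cos_sq α
  ext i j
  fin_cases i <;> fin_cases j <;>
    simp [Real.cos_sub, Real.sin_sub, ← hw0, ← hw1, ← hz0, ← hz1]
  · linear_combination r * Real.cos β * hsq
  · linear_combination r * Real.sin β * hsq

lemma apply_eq_of_gram_eq {d n : ℕ} (hdn : 2 * n ≤ d)
    {Ω : Matrix (Fin d) (Fin n) ℝ → ℝ} (hdiff : Differentiable ℝ Ω)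
    (hmono : ∀ W P : Matrix (Fin d) (Fin n) ℝ, Wᵀ * P = 0 → Ω W ≤ Ω (W + P))
    {W Z : Matrix (Fin d) (Fin n) ℝ} (hWZ : Wᵀ * W = Zᵀ * Z) : Ω W = Ω Z := by
  by_cases hd : n + 2 ≤ d
  · exact apply_eq_of_gram_eq_of_add_two_le hd hdiff hmono hWZ
  · rcases Nat.eq_zero_or_pos n with rfl | hn
    · rw [Subsingleton.elim W Z]
    · obtain rfl : n = 1 := by omega
      obtain rfl : d = 2 := by omega
      exact apply_eq_of_gram_eq_of_plane hdiff hmono hWZ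

/-- There are two `d × n` isometries with orthogonal ranges when `2 * n ≤ d`. -/
lemma exists_orthogonal_isometries {d n : ℕ} (hdn : 2 * n ≤ d) :
    ∃ E F : Matrix (Fin d) (Fin n) ℝ, Eᵀ * E = 1 ∧ Fᵀ * F = 1 ∧ Eᵀ * F = 0 := by
  have hinj : Function.Injective (Fin.castLE (show n + n ≤ d by omega)) := Fin.castLE_injective _
  let Q : Matrix (Fin d) (Fin d) ℝ := 1
  have hQ (f g : Fin n → Fin d) : (Q.submatrix id f)ᵀ * Q.submatrix id g = Q.submatrix f g := by
    rw [Matrix.transpose_submatrix, ← Matrix.submatrix_mul _ _ f id g Function.bijective_id]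
    simp [Q]
  refine ⟨Q.submatrix id (fun i => Fin.castLE (by omega) (Fin.castAdd n i)),
    Q.submatrix id (fun i => Fin.castLE (by omega) (Fin.natAdd n i)), ?_, ?_, ?_⟩
  · rw [hQ]
    exact Matrix.submatrix_one _ (hinj.comp (Fin.castAdd_injective n n))
  · rw [hQ]
    exact Matrix.submatrix_one _ (hinj.comp (Fin.natAdd_injective n n))
  · rw [hQ]
    ext i j
    refine Matrix.one_apply_ne fun h => ?_
    have := congrArg Fin.val h
    simp at this
    omega

open scoped MatrixOrder in
lemma exists_eq_transpose_mul_self_of_posSemidef {n : ℕ} {A : Matrix (Fin n) (Fin n) ℝ}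
    (hA : A.PosSemidef) : ∃ S : Matrix (Fin n) (Fin n) ℝ, A = Sᵀ * S := by
  obtain ⟨S, rfl⟩ := CStarAlgebra.nonneg_iff_eq_star_mul_self.mp hA.nonneg
  exact ⟨S, by rw [Matrix.star_eq_conjTranspose, Matrix.conjTranspose_eq_transpose_of_trivial]⟩

theorem stmt_13 {d n : ℕ} (hdn : 2 * n ≤ d) (Ω : Matrix (Fin d) (Fin n) ℝ → ℝ)
    (hdiff : Differentiable ℝ Ω)
    (hmono : ∀ W P : Matrix (Fin d) (Fin n) ℝ, Wᵀ * P = 0 → Ω W ≤ Ω (W + P)) :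
    ∃ h : Matrix (Fin n) (Fin n) ℝ → ℝ,
      (∀ A B : Matrix (Fin n) (Fin n) ℝ,
        A.PosSemidef → B.PosSemidef → (B - A).PosSemidef → h A ≤ h B) ∧
      ∀ W : Matrix (Fin d) (Fin n) ℝ, Ω W = h (Wᵀ * W) := by
  obtain ⟨h, hΩ⟩ : ∃ h : Matrix (Fin n) (Fin n) ℝ → ℝ, ∀ W, Ω W = h (Wᵀ * W) := by
    have hfac : Function.FactorsThrough Ω (fun W => Wᵀ * W) :=
      fun _ _ hWZ => apply_eq_of_gram_eq hdn hdiff hmono hWZ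
    exact ⟨Function.extend (fun W => Wᵀ * W) Ω 0, fun W => (hfac.extend_apply 0 W).symm⟩
  refine ⟨h, fun A B hA _ hBA => ?_, hΩ⟩
  obtain ⟨E, F, hE, hF, hEF⟩ := exists_orthogonal_isometries hdn
  have hFE : Fᵀ * E = 0 := by
    simpa [Matrix.transpose_mul] using congrArg Matrix.transpose hEF
  obtain ⟨S, hS⟩ := exists_eq_transpose_mul_self_of_posSemidef hA
  obtain ⟨T, hT⟩ := exists_eq_transpose_mul_self_of_posSemidef hBA
  have hmul (M N : Matrix (Fin d) (Fin n) ℝ) (K L : Matrix (Fin n) (Fin n) ℝ) :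
      (M * K)ᵀ * (N * L) = Kᵀ * (Mᵀ * N) * L := by
    simp only [Matrix.transpose_mul, Matrix.mul_assoc]
  have h1 := hmono (E * S) (F * T) (by rw [hmul, hEF]; simp)
  rw [hΩ, hΩ, Matrix.transpose_add, Matrix.add_mul, Matrix.mul_add, Matrix.mul_add] at h1
  simp only [hmul, hE, hF, hEF, hFE, Matrix.mul_one, Matrix.mul_zero, Matrix.zero_mul, add_zero,
    zero_add, ← hS, ← hT, add_sub_cancel] at h1
  exact h1
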